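/- arXiv:2509.14841 — 3 statements merged into one kernel-verified Lean document; each statement's English description precedes it below -/
import Mathlib

section
/- Let n be a positive natural number and σ a real number with σ ≠ 0 (the constant noise magnitude at every frequency). Let C : Fin n → ℝ be a nonnegative antitone function (the content magnitude spectrum, which decays with frequency). Let w₁, w₂ : Fin n → ℝ be nonnegative weight functions with Σᵢ w₁ i > 0, Σᵢ w₂ i > 0, such that for all i ≤ j, w₁ i * w₂ j ≥ w₂ i * w₁ j. Define the signal-to-noise ratio under weights w as SNR(w) = (Σᵢ w i * (C i)²) / (Σᵢ w i * σ²). Then SNR(w₂) ≤ SNR(w₁). -/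
/-!
Write `S = C ^ 2` for the signal and `N = σ ^ 2` for the noise. By the Binet–Cauchy identity,
`2 * ((∑ w₁ S) (∑ w₂ N) - (∑ w₁ N) (∑ w₂ S))` is the sum over all pairs `(i, j)` of the product of
the minors `w₁ i * w₂ j - w₂ i * w₁ j` and `S i * N j - N i * S j`. Both minors are nonnegative for
`i ≤ j` and both change sign when `i` and `j` are swapped, so every product is nonnegative.
-/

theorem sum_sum_minor_mul_minor {ι R : Type*} [CommRing R] (s : Finset ι) (a b c d : ι → R) :
    ∑ i ∈ s, ∑ j ∈ s, (a i * b j - b i * a j) * (c i * d j - d i * c j) =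
      2 * ((∑ i ∈ s, a i * c i) * (∑ i ∈ s, b i * d i) -
        (∑ i ∈ s, a i * d i) * (∑ i ∈ s, b i * c i)) := by
  have expand_minors : ∀ i j, (a i * b j - b i * a j) * (c i * d j - d i * c j) =
      a i * c i * (b j * d j) - a i * d i * (b j * c j) -
        b i * c i * (a j * d j) + b i * d i * (a j * c j) := fun i j ↦ by ring
  simp only [expand_minors, Finset.sum_add_distrib, Finset.sum_sub_distrib, ← Finset.sum_mul_sum]
  ring

/-- The ratio `a / b` is antitone (for densities, the likelihood-ratio order). The condition is
cross-multiplied, so that it makes sense in a ring and where `b` vanishes. -/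
def RatioAntitone {ι R : Type*} [LE ι] [Mul R] [LE R] (a b : ι → R) : Prop :=
  ∀ ⦃i j⦄, i ≤ j → b i * a j ≤ a i * b j

namespace RatioAntitone

variable {ι R : Type*}

theorem of_antitone_const [Preorder ι] [CommMonoidWithZero R] [Preorder R] [PosMulMono R]
    {f : ι → R} (hf : Antitone f) {c : R} (hc : 0 ≤ c) : RatioAntitone f fun _ ↦ c :=
  fun i j hij ↦ calc
    c * f j ≤ c * f i := mul_le_mul_of_nonneg_left (hf hij) hc
    _ = f i * c := mul_comm _ _

variable [LinearOrder ι] [CommRing R] {a b c d : ι → R}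

theorem minor_mul_minor_nonneg [PartialOrder R] [IsOrderedRing R]
    (hab : RatioAntitone a b) (hcd : RatioAntitone c d) (i j : ι) :
    0 ≤ (a i * b j - b i * a j) * (c i * d j - d i * c j) := by
  rcases le_total i j with hij | hji
  · exact mul_nonneg (sub_nonneg.2 (hab hij)) (sub_nonneg.2 (hcd hij))
  · calc
      0 ≤ (a j * b i - b j * a i) * (c j * d i - d j * c i) :=
        mul_nonneg (sub_nonneg.2 (hab hji)) (sub_nonneg.2 (hcd hji))
      _ = (a i * b j - b i * a j) * (c i * d j - d i * c j) := by ring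

theorem sum_mul_sum_le_sum_mul_sum [LinearOrder R] [IsStrictOrderedRing R]
    (hab : RatioAntitone a b) (hcd : RatioAntitone c d) (s : Finset ι) :
    (∑ i ∈ s, a i * d i) * (∑ i ∈ s, b i * c i) ≤
      (∑ i ∈ s, a i * c i) * (∑ i ∈ s, b i * d i) := by
  have double_sum_nonneg :
      0 ≤ ∑ i ∈ s, ∑ j ∈ s, (a i * b j - b i * a j) * (c i * d j - d i * c j) :=
    Finset.sum_nonneg fun i _ ↦ Finset.sum_nonneg fun j _ ↦ hab.minor_mul_minor_nonneg hcd i j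
  rw [sum_sum_minor_mul_minor] at double_sum_nonneg
  exact sub_nonneg.1 (nonneg_of_mul_nonneg_right double_sum_nonneg two_pos)

end RatioAntitone

theorem snr_le_of_weight_shift_general {ι K : Type*} [LinearOrder ι] [Field K] [LinearOrder K]
    [IsStrictOrderedRing K] (s : Finset ι) {w₁ w₂ S N : ι → K}
    (hw : RatioAntitone w₁ w₂) (hSN : RatioAntitone S N)
    (hN₁ : 0 < ∑ i ∈ s, w₁ i * N i) (hN₂ : 0 < ∑ i ∈ s, w₂ i * N i) :
    (∑ i ∈ s, w₂ i * S i) / (∑ i ∈ s, w₂ i * N i) ≤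
      (∑ i ∈ s, w₁ i * S i) / (∑ i ∈ s, w₁ i * N i) := by
  rw [div_le_div_iff₀ hN₂ hN₁, mul_comm]
  exact hw.sum_mul_sum_le_sum_mul_sum hSN s

/-- As the frequency-dependent learning weights shift emphasis from low to high
frequencies (likelihood-ratio ordering), the effective signal-to-noise ratio
does not increase. -/
theorem snr_le_of_weight_shift
    (n : ℕ) (hn : 0 < n) (σ : ℝ) (hσ : σ ≠ 0)
    (C : Fin n → ℝ) (hC0 : ∀ i, 0 ≤ C i) (hC : Antitone C)
    (w₁ w₂ : Fin n → ℝ)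
    (hw₁ : ∀ i, 0 ≤ w₁ i) (hw₂ : ∀ i, 0 ≤ w₂ i)
    (hs₁ : 0 < ∑ i, w₁ i) (hs₂ : 0 < ∑ i, w₂ i)
    (hlr : ∀ i j : Fin n, i ≤ j → w₁ i * w₂ j ≥ w₂ i * w₁ j) :
    (∑ i, w₂ i * (C i) ^ 2) / (∑ i, w₂ i * σ ^ 2) ≤
      (∑ i, w₁ i * (C i) ^ 2) / (∑ i, w₁ i * σ ^ 2) := by
  have hσ_sq : 0 < σ ^ 2 := sq_pos_of_ne_zero hσ
  have hC_sq : Antitone fun i ↦ C i ^ 2 := fun _ j hij ↦ pow_le_pow_left₀ (hC0 j) (hC hij) 2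
  exact snr_le_of_weight_shift_general Finset.univ hlr (.of_antitone_const hC_sq hσ_sq.le)
    (by simpa only [← Finset.sum_mul] using mul_pos hs₁ hσ_sq)
    (by simpa only [← Finset.sum_mul] using mul_pos hs₂ hσ_sq)
end

section
/- Let n be a positive natural number and σ a real number with σ ≠ 0. Let C : Fin n → ℝ be nonnegative and antitone. Let w₁, w₂ : Fin n → ℝ be nonnegative weight functions with Σᵢ w₁ i > 0 and Σᵢ w₂ i > 0, satisfying w₁ i * w₂ j ≥ w₂ i * w₁ j for all i ≤ j. Suppose moreover that there exist indices i₀ < j₀ with (C i₀)² > (C j₀)², w₁ i₀ > 0, w₂ j₀ > 0, and the strict inequality w₁ i₀ * w₂ j₀ > w₂ i₀ * w₁ j₀. Define SNR(w) = (Σᵢ w i * (C i)²) / (Σᵢ w i * σ²). Then SNR(w₂) < SNR(w₁), i.e. the signal-to-noise ratio strictly decreases. -/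
/-!
Antisymmetrizing the cross-multiplied difference of the two weighted means of `f` turns it into
half of `∑ i, ∑ j, (v i * w j - w i * v j) * (f i - f j)`. When `w` favours high indices relative
to `v` and `f` is antitone, both factors are nonnegative for `i ≤ j` and nonpositive for `j ≤ i`,
so every summand is nonnegative.
-/

section WeightedSums

variable {ι R : Type*} {s : Finset ι} {v w f : ι → R}

lemma sum_sum_cross_sub_mul_sub [CommRing R] (s : Finset ι) (v w f : ι → R) :
    ∑ i ∈ s, ∑ j ∈ s, (v i * w j - w i * v j) * (f i - f j) =
      2 * ((∑ i ∈ s, v i * f i) * ∑ i ∈ s, w i - (∑ i ∈ s, w i * f i) * ∑ i ∈ s, v i) := by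
  have expand (i j : ι) : (v i * w j - w i * v j) * (f i - f j) =
      v i * f i * w j - v i * (w j * f j) - w i * f i * v j + w i * (v j * f j) := by ring
  simp only [expand, Finset.sum_add_distrib, Finset.sum_sub_distrib, ← Finset.mul_sum,
    ← Finset.sum_mul]
  ring

lemma cross_sub_mul_sub_nonneg [LinearOrder ι] [CommRing R] [PartialOrder R] [IsOrderedRing R]
    (hvw : ∀ i ∈ s, ∀ j ∈ s, i ≤ j → w i * v j ≤ v i * w j) (hf : AntitoneOn f s)
    {i j : ι} (hi : i ∈ s) (hj : j ∈ s) :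
    0 ≤ (v i * w j - w i * v j) * (f i - f j) := by
  rcases le_total i j with hij | hji
  · exact mul_nonneg (sub_nonneg.2 (hvw i hi j hj hij)) (sub_nonneg.2 (hf hi hj hij))
  · have hcross : v i * w j ≤ w i * v j := by
      simpa only [mul_comm] using hvw j hj i hi hji
    exact mul_nonneg_of_nonpos_of_nonpos (sub_nonpos.2 hcross) (sub_nonpos.2 (hf hj hi hji))

lemma sum_mul_mul_sum_lt_of_cross_sub_mul_sub_nonneg
    [CommRing R] [LinearOrder R] [IsStrictOrderedRing R]
    (hnonneg : ∀ i ∈ s, ∀ j ∈ s, 0 ≤ (v i * w j - w i * v j) * (f i - f j))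
    {i₀ j₀ : ι} (hi₀ : i₀ ∈ s) (hj₀ : j₀ ∈ s)
    (hpos : 0 < (v i₀ * w j₀ - w i₀ * v j₀) * (f i₀ - f j₀)) :
    (∑ i ∈ s, w i * f i) * ∑ i ∈ s, v i < (∑ i ∈ s, v i * f i) * ∑ i ∈ s, w i := by
  have hsum : 0 < ∑ i ∈ s, ∑ j ∈ s, (v i * w j - w i * v j) * (f i - f j) :=
    Finset.sum_pos' (fun i hi ↦ Finset.sum_nonneg (hnonneg i hi))
      ⟨i₀, hi₀, Finset.sum_pos' (hnonneg i₀ hi₀) ⟨j₀, hj₀, hpos⟩⟩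
  rw [sum_sum_cross_sub_mul_sub] at hsum
  exact sub_pos.1 (pos_of_mul_pos_right hsum zero_le_two)

end WeightedSums

/-- `P` is the power spectrum of the content and `N` the constant noise power. -/
theorem snr_lt_of_strict_weight_shift_general {ι K : Type*} [LinearOrder ι]
    [Field K] [LinearOrder K] [IsStrictOrderedRing K] {s : Finset ι} {P w₁ w₂ : ι → K} {N : K}
    (hN : 0 < N) (hP : AntitoneOn P s) (hs₁ : 0 < ∑ i ∈ s, w₁ i) (hs₂ : 0 < ∑ i ∈ s, w₂ i)
    (hlr : ∀ i ∈ s, ∀ j ∈ s, i ≤ j → w₂ i * w₁ j ≤ w₁ i * w₂ j)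
    {i₀ j₀ : ι} (hi₀ : i₀ ∈ s) (hj₀ : j₀ ∈ s) (hP₀ : P j₀ < P i₀)
    (hstrict : w₂ i₀ * w₁ j₀ < w₁ i₀ * w₂ j₀) :
    (∑ i ∈ s, w₂ i * P i) / (∑ i ∈ s, w₂ i * N) <
      (∑ i ∈ s, w₁ i * P i) / (∑ i ∈ s, w₁ i * N) := by
  have hcross : (∑ i ∈ s, w₂ i * P i) * ∑ i ∈ s, w₁ i < (∑ i ∈ s, w₁ i * P i) * ∑ i ∈ s, w₂ i :=
    sum_mul_mul_sum_lt_of_cross_sub_mul_sub_nonneg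
      (fun _ hi _ hj ↦ cross_sub_mul_sub_nonneg hlr hP hi hj) hi₀ hj₀
      (mul_pos (sub_pos.2 hstrict) (sub_pos.2 hP₀))
  have hmean : (∑ i ∈ s, w₂ i * P i) / ∑ i ∈ s, w₂ i < (∑ i ∈ s, w₁ i * P i) / ∑ i ∈ s, w₁ i :=
    (div_lt_div_iff₀ hs₂ hs₁).2 hcross
  simpa only [← Finset.sum_mul, div_mul_eq_div_div] using div_lt_div_of_pos_right hmean hN

/-- Strict version: under the likelihood-ratio weight shift toward high
frequencies, with a genuinely non-degenerate content spectrum and reweighting,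
the signal-to-noise ratio strictly decreases. -/
theorem snr_lt_of_strict_weight_shift
    (n : ℕ) (hn : 0 < n) (σ : ℝ) (hσ : σ ≠ 0)
    (C : Fin n → ℝ) (hC0 : ∀ i, 0 ≤ C i) (hC : Antitone C)
    (w₁ w₂ : Fin n → ℝ)
    (hw₁ : ∀ i, 0 ≤ w₁ i) (hw₂ : ∀ i, 0 ≤ w₂ i)
    (hs₁ : 0 < ∑ i, w₁ i) (hs₂ : 0 < ∑ i, w₂ i)
    (hlr : ∀ i j : Fin n, i ≤ j → w₁ i * w₂ j ≥ w₂ i * w₁ j)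
    (i₀ j₀ : Fin n) (hij : i₀ < j₀)
    (hCij : (C i₀) ^ 2 > (C j₀) ^ 2)
    (hw₁i : 0 < w₁ i₀) (hw₂j : 0 < w₂ j₀)
    (hstrict : w₁ i₀ * w₂ j₀ > w₂ i₀ * w₁ j₀) :
    (∑ i, w₂ i * (C i) ^ 2) / (∑ i, w₂ i * σ ^ 2) <
      (∑ i, w₁ i * (C i) ^ 2) / (∑ i, w₁ i * σ ^ 2) :=
  snr_lt_of_strict_weight_shift_general (sq_pos_of_ne_zero hσ)
    (fun _ _ j _ h ↦ pow_le_pow_left₀ (hC0 j) (hC h) 2) hs₁ hs₂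
    (fun i _ j _ ↦ hlr i j) (Finset.mem_univ i₀) (Finset.mem_univ j₀) hCij hstrict
end

section
/- Let n be a positive natural number and σ a real number with σ ≠ 0. Let C : Fin n → ℝ be nonnegative and antitone. Let w : ℕ → Fin n → ℝ be a family of weight functions indexed by training time t, each nonnegative with Σᵢ w t i > 0 for every t, and such that for every t and all indices i ≤ j, w t i * w (t+1) j ≥ w (t+1) i * w t j (at each step the weights shift relative emphasis from low to high frequencies). Define SNR(t) = (Σᵢ w t i * (C i)²) / (Σᵢ w t i * σ²). Then the function t ↦ SNR(t) is antitone on ℕ: for all s ≤ t, SNR(t) ≤ SNR(s). -/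
/-!
Chebyshev's association inequality for two weights: symmetrizing the difference of the
cross-multiplied weighted means of `f` under `u` and `v` turns it into a double sum of products
`(f i - f j) * (u i * v j - v i * u j)`. If `v` lies above `u` in the likelihood-ratio order and `f`
is antitone, the two factors have the same sign for every pair, so passing from `u` to `v` lowers
the mean. The signal-to-noise ratio is such a mean of `C ^ 2`, divided by the noise power `σ ^ 2`.
-/

/-- The likelihood-ratio order on weights: for positive `u`, the ratio `v / u` is monotone.
The cross-multiplied form allows weights that vanish. -/
def LikelihoodRatioLE {ι R : Type*} [LE ι] [Mul R] [LE R] (u v : ι → R) : Prop :=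
  ∀ ⦃i j⦄, i ≤ j → v i * u j ≤ u i * v j

theorem sum_sum_sub_mul_sub_eq_two_mul {ι R : Type*} [CommRing R] (s : Finset ι)
    (f u v : ι → R) :
    ∑ i ∈ s, ∑ j ∈ s, (f i - f j) * (u i * v j - v i * u j) =
      2 * ((∑ i ∈ s, u i * f i) * ∑ i ∈ s, v i - (∑ i ∈ s, v i * f i) * ∑ i ∈ s, u i) := by
  let d (i j : ι) : R := u i * f i * v j - v i * f i * u j
  have sum_d : ∑ i ∈ s, ∑ j ∈ s, d i j =
      (∑ i ∈ s, u i * f i) * ∑ i ∈ s, v i - (∑ i ∈ s, v i * f i) * ∑ i ∈ s, u i := by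
    simp only [d, Finset.sum_sub_distrib, Finset.sum_mul_sum]
  calc ∑ i ∈ s, ∑ j ∈ s, (f i - f j) * (u i * v j - v i * u j)
      = ∑ i ∈ s, ∑ j ∈ s, (d i j + d j i) :=
        Finset.sum_congr rfl fun i _ => Finset.sum_congr rfl fun j _ => by ring
    _ = ∑ i ∈ s, ∑ j ∈ s, d i j + ∑ i ∈ s, ∑ j ∈ s, d j i := by
        simp only [Finset.sum_add_distrib]
    _ = 2 * ∑ i ∈ s, ∑ j ∈ s, d i j := by
        rw [Finset.sum_comm (f := fun i j => d j i), two_mul]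
    _ = _ := by rw [sum_d]

namespace LikelihoodRatioLE

variable {ι : Type*} [LinearOrder ι]

theorem sub_mul_sub_nonneg {R : Type*} [CommRing R] [LinearOrder R] [IsStrictOrderedRing R]
    {f u v : ι → R} (huv : LikelihoodRatioLE u v) (hf : Antitone f) (i j : ι) :
    0 ≤ (f i - f j) * (u i * v j - v i * u j) := by
  rcases le_total i j with hij | hji
  · exact mul_nonneg (sub_nonneg.2 (hf hij)) (sub_nonneg.2 (huv hij))
  · have cross_le : u i * v j ≤ v i * u j := by linarith [huv hji]
    exact mul_nonneg_of_nonpos_of_nonpos (sub_nonpos.2 (hf hji)) (sub_nonpos.2 cross_le)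

theorem sum_mul_mul_sum_le {R : Type*} [CommRing R] [LinearOrder R] [IsStrictOrderedRing R]
    {f u v : ι → R} (huv : LikelihoodRatioLE u v) (hf : Antitone f) (s : Finset ι) :
    (∑ i ∈ s, v i * f i) * ∑ i ∈ s, u i ≤ (∑ i ∈ s, u i * f i) * ∑ i ∈ s, v i := by
  have double_sum_nonneg : 0 ≤ ∑ i ∈ s, ∑ j ∈ s, (f i - f j) * (u i * v j - v i * u j) :=
    Finset.sum_nonneg fun i _ => Finset.sum_nonneg fun j _ => huv.sub_mul_sub_nonneg hf i j
  rw [sum_sum_sub_mul_sub_eq_two_mul] at double_sum_nonneg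
  exact sub_nonneg.1 (nonneg_of_mul_nonneg_right double_sum_nonneg two_pos)

theorem sum_mul_div_sum_le {K : Type*} [Field K] [LinearOrder K] [IsStrictOrderedRing K]
    {f u v : ι → K} (huv : LikelihoodRatioLE u v) (hf : Antitone f) {s : Finset ι}
    (hu : 0 < ∑ i ∈ s, u i) (hv : 0 < ∑ i ∈ s, v i) :
    (∑ i ∈ s, v i * f i) / ∑ i ∈ s, v i ≤ (∑ i ∈ s, u i * f i) / ∑ i ∈ s, u i :=
  (div_le_div_iff₀ hv hu).2 (huv.sum_mul_mul_sum_le hf s)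

end LikelihoodRatioLE

theorem snr_antitone_in_time_general {ι K : Type*} [Fintype ι] [LinearOrder ι]
    [Field K] [LinearOrder K] [IsStrictOrderedRing K] {σ : K} (hσ : σ ≠ 0)
    {C : ι → K} (hC : Antitone fun i => C i ^ 2) {w : ℕ → ι → K}
    (hs : ∀ t, 0 < ∑ i, w t i) (hlr : ∀ t, LikelihoodRatioLE (w t) (w (t + 1))) :
    Antitone fun t => (∑ i, w t i * C i ^ 2) / ∑ i, w t i * σ ^ 2 := by
  refine antitone_nat_of_succ_le fun t => ?_
  simp only [← Finset.sum_mul, ← div_div]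
  exact (div_le_div_iff_of_pos_right (sq_pos_of_ne_zero hσ)).2
    ((hlr t).sum_mul_div_sum_le hC (hs t) (hs (t + 1)))

/-- Temporal SNR degradation: if at each training step the frequency-dependent
learning weights shift emphasis from low to high frequencies in the
likelihood-ratio sense, then the signal-to-noise ratio is antitone in time. -/
theorem snr_antitone_in_time
    (n : ℕ) (hn : 0 < n) (σ : ℝ) (hσ : σ ≠ 0)
    (C : Fin n → ℝ) (hC0 : ∀ i, 0 ≤ C i) (hC : Antitone C)
    (w : ℕ → Fin n → ℝ)
    (hw : ∀ t i, 0 ≤ w t i)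
    (hs : ∀ t, 0 < ∑ i, w t i)
    (hlr : ∀ t, ∀ i j : Fin n, i ≤ j →
      w t i * w (t + 1) j ≥ w (t + 1) i * w t j) :
    Antitone (fun t => (∑ i, w t i * (C i) ^ 2) / (∑ i, w t i * σ ^ 2)) :=
  snr_antitone_in_time_general hσ (fun _ j hij => pow_le_pow_left₀ (hC0 j) (hC hij) 2) hs hlr
end
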